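/- For all γ > 0 and α > 0 there exists n₀ such that the following holds. Suppose H is a 3-uniform hypergraph on n > n₀ vertices with δ₁(H) ≥ (7/16 + γ)·C(n,2). Then there is an M-tiling of H which covers all but at most αn vertices of H. -/

import Mathlib

/-!
Weak regularity (refining along witnesses of irregularity increases the energy) partitions the
vertices into boundedly many clusters, so that all but a small proportion of the edges lie in lower
regular triples of clusters. A lower regular triple of clusters contains copies of `M` until its
clusters are almost used up, since any dense triple of vertex sets contains one. A nearly perfect
tiling therefore reduces to a perfect fractional one of the cluster hypergraph, where a copy of `M`
puts weights `3, 3, 2` on the clusters of an edge.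

If there is no fractional tiling, linear programming duality provides a function `y` on the clusters
that is positive on every edge, weighted in this way, but of negative mean. Let `y` be minimal at
`i` and rescale `y` to `z ≥ 0` with `z i = 0` and mean at most `1`. Edges `{i, j, k}` then satisfy
`3 z j + 2 z k ≥ 8` and `2 z j + 3 z k ≥ 8`, and a random threshold for `z` shows that at most a
proportion `7 / 16` of all pairs does, contrary to the minimum degree.
-/

open Finset

/-- `g` describes a copy of the hypergraph `M` (vertices `{1,…,8}`, edges `{1,2,3}`,
`{3,4,5}`, `{4,5,6}`, `{6,7,8}`) inside the `3`-uniform hypergraph `H`. -/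
def IsMCopy {V : Type} [DecidableEq V] (H : Finset (Finset V)) (g : Fin 8 → V) : Prop :=
  Function.Injective g ∧
  ({g 0, g 1, g 2} : Finset V) ∈ H ∧ ({g 2, g 3, g 4} : Finset V) ∈ H ∧
  ({g 3, g 4, g 5} : Finset V) ∈ H ∧ ({g 5, g 6, g 7} : Finset V) ∈ H

section Threshold

open MeasureTheory

lemma integrableOn_indicator_const {A : Set ℝ} (hA : MeasurableSet A) (c : ℝ) {a b : ℝ} :
    IntegrableOn (A.indicator fun _ => c) (Set.Icc a b) :=
  (integrableOn_const (by simp)).indicator hA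

lemma integral_lower_threshold {c : ℝ} (hc : 0 < c) (x : ℝ) :
    ∫ θ in Set.Icc (0 : ℝ) 1, ({θ | c * θ ≤ x} : Set ℝ).indicator (fun _ => c) θ =
      max 0 (min c x) := by
  have hset : {θ | c * θ ≤ x} = Set.Iic (x / c) := by ext θ; simp [le_div_iff₀' hc]
  rw [hset, setIntegral_indicator measurableSet_Iic, setIntegral_const, ← Set.Ici_inter_Iic,
    Set.inter_assoc, Set.Iic_inter_Iic, Set.Ici_inter_Iic, Real.volume_real_Icc, smul_eq_mul]
  simp [hc.le, max_mul_of_nonneg, min_mul_of_nonneg, hc.ne', max_comm]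

lemma integral_upper_threshold {c : ℝ} (hc : 0 < c) (x : ℝ) :
    ∫ θ in Set.Icc (0 : ℝ) 1, ({θ | c * (1 - θ) ≤ x} : Set ℝ).indicator (fun _ => c) θ =
      max 0 (min c x) := by
  have hset : {θ | c * (1 - θ) ≤ x} = Set.Ici (1 - x / c) := by
    ext θ; simp [← le_div_iff₀' hc, add_comm]
  rw [hset, setIntegral_indicator measurableSet_Ici, setIntegral_const, ← Set.Ici_inter_Iic,
    Set.inter_right_comm, Set.Ici_inter_Ici, Set.Ici_inter_Iic, Real.volume_real_Icc, smul_eq_mul]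
  simp only [sub_sup, sub_sub_cancel, sub_zero]
  rw [max_mul_of_nonneg _ _ hc.le, min_mul_of_nonneg _ _ hc.le, max_comm]
  simp [hc.ne']

/-- Averaged over `θ`, the contribution of `i` to the left-hand side is
`s i * min (c₁ + c₂) (z i)`. -/
lemma exists_threshold {ι : Type*} [Fintype ι] {s z : ι → ℝ} (hs : ∀ i, 0 ≤ s i)
    (hz : ∀ i, 0 ≤ z i) {c₁ c₂ : ℝ} (hc₁ : 0 < c₁) (hc₂ : 0 < c₂) :
    ∃ θ ∈ Set.Icc (0 : ℝ) 1,
      c₁ * ∑ i with c₁ * (1 - θ) ≤ z i, s i + c₂ * ∑ i with c₁ + c₂ * θ ≤ z i, s i ≤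
        ∑ i, s i * z i := by
  let f₁ (i : ι) : ℝ → ℝ := ({θ | c₁ * (1 - θ) ≤ z i} : Set ℝ).indicator fun _ => c₁
  let f₂ (i : ι) : ℝ → ℝ := ({θ | c₂ * θ ≤ z i - c₁} : Set ℝ).indicator fun _ => c₂
  have hf₁ (i : ι) : IntegrableOn (f₁ i) (Set.Icc 0 1) :=
    integrableOn_indicator_const (measurableSet_le (by fun_prop) (by fun_prop)) c₁
  have hf₂ (i : ι) : IntegrableOn (f₂ i) (Set.Icc 0 1) :=
    integrableOn_indicator_const (measurableSet_le (by fun_prop) (by fun_prop)) c₂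
  have hinteg (i : ι) : IntegrableOn (fun θ => s i * (f₁ i θ + f₂ i θ)) (Set.Icc 0 1) :=
    ((hf₁ i).add (hf₂ i)).const_mul (s i)
  obtain ⟨θ, hθ, hle⟩ := exists_le_setAverage (μ := volume) (s := Set.Icc (0 : ℝ) 1) (by simp)
    (by simp) (integrable_finsetSum univ fun i _ => hinteg i)
  refine ⟨θ, hθ, le_trans (le_of_eq ?_) (hle.trans ?_)⟩
  · simp only [f₁, f₂, Set.indicator_apply, Set.mem_ofPred_eq, sum_filter, mul_add,
      sum_add_distrib, mul_sum, mul_ite, mul_zero, le_sub_iff_add_le', mul_comm]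
  · rw [setAverage_eq, Real.volume_real_Icc_of_le zero_le_one, sub_zero, inv_one, one_smul,
      integral_finsetSum _ fun i _ => hinteg i]
    refine sum_le_sum fun i _ => ?_
    rw [integral_const_mul, integral_add (hf₁ i) (hf₂ i), integral_upper_threshold hc₁,
      integral_lower_threshold hc₂]
    refine mul_le_mul_of_nonneg_left ?_ (hs i)
    have := hz i
    grind

end Threshold

section PairDensity

variable {ι : Type*} [Fintype ι] {Q : ι → ι → Prop} [DecidableRel Q] {s : ι → ℝ}

lemma sum_pair_weight_le_of_cover (hs : ∀ i, 0 ≤ s i) {A B : Finset ι}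
    (hQ : ∀ i j, Q i j → i ∈ A ∨ j ∈ A ∨ i ∈ B ∧ j ∈ B) :
    ∑ i, ∑ j, (if Q i j then s i * s j else 0) ≤
      2 * (∑ i ∈ A, s i) * ∑ i, s i - (∑ i ∈ A, s i) ^ 2 + (∑ i ∈ B, s i) ^ 2 := by
  classical
  let a (i : ι) : ℝ := if i ∈ A then s i else 0
  let b (i : ι) : ℝ := if i ∈ B then s i else 0
  have ha : ∑ i ∈ A, s i = ∑ i, a i := by simp [a]
  have hb : ∑ i ∈ B, s i = ∑ i, b i := by simp [b]
  calc ∑ i, ∑ j, (if Q i j then s i * s j else 0)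
      ≤ ∑ i, ∑ j, (a i * s j + s i * a j - a i * a j + b i * b j) := by
        refine sum_le_sum fun i _ => sum_le_sum fun j _ => ?_
        have hij := mul_nonneg (hs i) (hs j)
        have := hQ i j
        simp only [a, b]
        split_ifs <;> grind
    _ = _ := by
        rw [ha, hb]
        simp only [sum_add_distrib, sum_sub_distrib, ← sum_mul_sum]
        ring

lemma two_mul_sub_sq_add_sq_le {a b S : ℝ} (ha : 0 ≤ a) (hb : 0 ≤ b)
    (h : 4 * a + 8 / 5 * b ≤ S) : 2 * a * S - a ^ 2 + b ^ 2 ≤ 7 / 16 * S ^ 2 := by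
  nlinarith [mul_nonneg ha hb, sq_nonneg (S - 4 * a)]

lemma sum_pair_weight_le (hs : ∀ i, 0 ≤ s i) {z : ι → ℝ} (hz : ∀ i, 0 ≤ z i)
    (hsz : ∑ i, s i * z i ≤ ∑ i, s i)
    (hQ : ∀ i j, Q i j → 8 ≤ 3 * z i + 2 * z j ∧ 8 ≤ 2 * z i + 3 * z j) :
    ∑ i, ∑ j, (if Q i j then s i * s j else 0) ≤ 7 / 16 * (∑ i, s i) ^ 2 := by
  classical
  obtain ⟨θ, ⟨hθ₀, -⟩, hθ⟩ := exists_threshold hs hz (c₁ := 8 / 5) (c₂ := 12 / 5) (by norm_num)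
    (by norm_num)
  let A : Finset ι := {i | 8 / 5 + 12 / 5 * θ ≤ z i}
  let B : Finset ι := {i | 8 / 5 * (1 - θ) ≤ z i}
  have hAB : A ⊆ B := monotone_filter_right _ fun i _ hi => by linarith
  -- If `z i` and `z j` are both below `8 / 5 + 12 / 5 * θ`, then each is at least
  -- `(8 - 2 * (8 / 5 + 12 / 5 * θ)) / 3 = 8 / 5 * (1 - θ)`.
  have hcover (i j) (hij : Q i j) : i ∈ A ∨ j ∈ A ∨ i ∈ B \ A ∧ j ∈ B \ A := by
    have := hQ i j hij
    simp only [A, B, mem_sdiff, mem_filter_univ]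
    grind
  refine (sum_pair_weight_le_of_cover hs hcover).trans
    (two_mul_sub_sq_add_sq_le (sum_nonneg fun i _ => hs i) (sum_nonneg fun i _ => hs i) ?_)
  linarith [sum_sdiff (f := s) hAB]

end PairDensity

section Duality

lemma exists_nonneg_combination {ι T : Type*} [Fintype ι] [Fintype T] {v : T → ι → ℝ} {m : ℝ}
    {s : ι → ℝ} (hm : 0 < m) (hv : ∀ t, ∑ p, v t p = m) (hs : 0 < ∑ p, s p)
    (h : ∀ y : ι → ℝ, (∀ t, 0 < ∑ p, v t p * y p) → 0 ≤ ∑ p, s p * y p) :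
    ∃ w : T → ℝ, (∀ t, 0 ≤ w t) ∧ ∀ p, ∑ t, w t * v t p = s p := by
  classical
  let K : Set (ι → ℝ) := Fintype.linearCombination ℝ v '' stdSimplex ℝ T
  set S := ∑ p, s p
  have hK : IsCompact K :=
    (isCompact_stdSimplex ℝ T).image (Fintype.linearCombination ℝ v).continuous_of_finiteDimensional
  by_cases hb : (m / S) • s ∈ K
  · obtain ⟨w, hw, hws⟩ := hb
    refine ⟨fun t => S / m * w t, fun t => mul_nonneg (by positivity) (hw.1 t), fun p => ?_⟩
    have hp := congr_fun hws p
    simp only [Fintype.linearCombination_apply, Finset.sum_apply, Pi.smul_apply, smul_eq_mul] at hp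
    simp only [mul_assoc, ← mul_sum, hp]
    field_simp
  · exfalso
    obtain ⟨f, u, hfb, hfK⟩ := geometric_hahn_banach_point_closed
      ((convex_stdSimplex ℝ T).linear_image _) hK.isClosed hb
    -- All points of `K` have mass `m`, so subtracting `u / m` turns the affine separation
    -- `u < f` on `K` into a linear one.
    let y (p : ι) : ℝ := f (Pi.single p 1) - u / m
    have hy (x : ι → ℝ) : ∑ p, x p * y p = f x - (∑ p, x p) * (u / m) := by
      have hfx : f x = ∑ p, x p * f (Pi.single p 1) := by
        conv_lhs => rw [pi_eq_sum_univ' x, map_sum]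
        simp
      simp only [hfx, y, mul_sub, sum_sub_distrib, sum_mul]
    have hvy (t : T) : 0 < ∑ p, v t p * y p := by
      have := hfK (v t) ⟨Pi.single t 1, single_mem_stdSimplex ℝ t, by simp⟩
      rw [hy, hv, mul_div_cancel₀ _ hm.ne']
      linarith
    have hsy : f s < S * (u / m) := by
      rw [map_smul, smul_eq_mul, div_mul_eq_mul_div, div_lt_iff₀ hs] at hfb
      rw [mul_div_assoc', lt_div_iff₀ hm]
      linarith
    linarith [h y hvy, hy s]

end Duality

section FractionalTiling

/-- The part of a triple that each vertex of `M` goes to: vertices `1, …, 8` of `M` go to parts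
`0, 1, 2, 0, 1, 2, 0, 1`, so that every edge of `M` meets every part. -/
def slot : Fin 8 → Fin 3 := ![0, 1, 2, 0, 1, 2, 0, 1]

variable {ι : Type*} [DecidableEq ι]

/-- The number of vertices that a copy of `M` placed along the triple `t` of clusters uses in the
cluster `p`. -/
def load (t : Fin 3 → ι) (p : ι) : ℕ := #{a | t (slot a) = p}

lemma sum_load_mul [Fintype ι] (t : Fin 3 → ι) (y : ι → ℝ) :
    ∑ p, load t p * y p = 3 * y (t 0) + 3 * y (t 1) + 2 * y (t 2) := by
  simp only [load, ← nsmul_eq_mul, ← sum_const]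
  rw [sum_fiberwise' univ (fun a => t (slot a)) y, Fin.sum_univ_eight]
  simp only [slot, Matrix.cons_val]
  ring

lemma sum_load [Fintype ι] (t : Fin 3 → ι) : ∑ p, (load t p : ℝ) = 8 := by
  have := sum_load_mul t 1
  simp only [Pi.one_apply, mul_one] at this
  linarith

/-- By duality it suffices to rule out weights `y` that are positive on all triples of `R` but
negative on `s`. The triples of `R` through a cluster minimizing `y` would then span a graph that is
too sparse. -/
lemma exists_fractional_tiling [Fintype ι] {s : ι → ℝ} (hs : ∀ i, 0 ≤ s i) (hS : 0 < ∑ i, s i)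
    {R : (Fin 3 → ι) → Prop} [DecidablePred R] (hR : ∀ i j k, R ![i, j, k] → R ![i, k, j])
    (hdeg : ∀ i, 0 < s i →
      7 / 16 * (∑ i, s i) ^ 2 < ∑ j, ∑ k, if R ![i, j, k] then s j * s k else 0) :
    ∃ w : {t // R t} → ℝ, (∀ t, 0 ≤ w t) ∧ ∀ p, ∑ t, w t * load t.1 p = s p := by
  refine exists_nonneg_combination (m := 8) (by norm_num) (fun t => sum_load t.1) hS
    fun y hy => ?_
  by_contra! hneg
  obtain ⟨j₀, -, hj₀⟩ : ∃ j ∈ univ, s j * y j < 0 :=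
    exists_lt_of_sum_lt (hneg.trans_eq sum_const_zero.symm)
  have hsj₀ : 0 < s j₀ := (hs j₀).lt_of_ne' (left_ne_zero_of_mul hj₀.ne)
  obtain ⟨i, hi, hmin⟩ := exists_min_image {j | 0 < s j} y ⟨j₀, by simpa using hsj₀⟩
  simp only [mem_filter_univ] at hi hmin
  have hyi : 0 < -y i := by linarith [hmin j₀ hsj₀, neg_of_mul_neg_right hj₀ (hs j₀)]
  let z (j : ι) : ℝ := max 0 (y j / -y i + 1)
  have hsz : ∑ j, s j * z j ≤ ∑ j, s j := by
    have hz (j : ι) : s j * z j = s j * y j / -y i + s j := by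
      rcases (hs j).eq_or_lt' with hj | hj
      · simp [hj]
      · have : -1 ≤ y j / -y i := by rw [le_div_iff₀ hyi]; linarith [hmin j hj]
        simp only [z, max_eq_right (show 0 ≤ y j / -y i + 1 by linarith)]
        ring
    rw [sum_congr rfl fun j _ => hz j, sum_add_distrib, ← sum_div]
    linarith [div_neg_of_neg_of_pos hneg hyi]
  have hedge {j k : ι} (hjk : R ![i, j, k]) : 8 ≤ 3 * z j + 2 * z k := by
    have hsum := hy ⟨_, hjk⟩
    simp only [sum_load_mul, Matrix.cons_val] at hsum
    have : 3 ≤ 3 * (y j / -y i) + 2 * (y k / -y i) := by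
      rw [← mul_div_assoc, ← mul_div_assoc, ← add_div, le_div_iff₀ hyi]
      linarith
    have hle (p : ι) : y p / -y i + 1 ≤ z p := le_max_right _ _
    linarith [hle j, hle k]
  refine (hdeg i hi).not_ge (sum_pair_weight_le hs (fun j => le_max_left _ _) hsz fun j k hjk => ?_)
  exact ⟨hedge hjk, (hedge (hR _ _ _ hjk)).trans_eq (add_comm _ _)⟩

end FractionalTiling

section Energy

open scoped BigOperators

variable {Ω β : Type*} [Fintype Ω] [DecidableEq β] {f g : Ω → ℝ} {C : Ω → β}

/-- The mean of `f` over the fibre of `C` above `b`; it is `0` when that fibre is empty. -/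
noncomputable def fiberMean (f : Ω → ℝ) (C : Ω → β) (b : β) : ℝ := 𝔼 o with C o = b, f o

/-- The energy of the partition of `Ω` into the fibres of `C`: the squared `ℓ²`-norm of the
conditional expectation of `f`. -/
noncomputable def energy (f : Ω → ℝ) (C : Ω → β) : ℝ := ∑ o, fiberMean f C (C o) ^ 2

lemma sum_mul_fiberMean (hg : g.FactorsThrough C) :
    ∑ o, g o * fiberMean f C (C o) = ∑ o, g o * f o := by
  have hmaps (o : Ω) (ho : o ∈ univ) : C o ∈ univ.image C := mem_image_of_mem C ho
  rw [← sum_fiberwise_of_maps_to hmaps, ← sum_fiberwise_of_maps_to hmaps]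
  refine sum_congr rfl fun b hb => ?_
  obtain ⟨o₀, -, rfl⟩ := mem_image.1 hb
  have hg₀ {o : Ω} (ho : o ∈ ({o | C o = C o₀} : Finset Ω)) : C o = C o₀ ∧ g o = g o₀ := by
    have := mem_filter_univ _ |>.1 ho
    exact ⟨this, hg this⟩
  calc ∑ o with C o = C o₀, g o * fiberMean f C (C o)
      = ∑ o with C o = C o₀, g o₀ * fiberMean f C (C o₀) :=
        sum_congr rfl fun o ho => by rw [(hg₀ ho).1, (hg₀ ho).2]
    _ = g o₀ * ∑ o with C o = C o₀, f o := by
        rw [sum_const, nsmul_eq_mul, mul_left_comm, fiberMean, card_mul_expect]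
    _ = ∑ o with C o = C o₀, g o * f o := by
        rw [mul_sum]
        exact sum_congr rfl fun o ho => by rw [(hg₀ ho).2]

lemma fiberMean_factorsThrough : (fun o => fiberMean f C (C o)).FactorsThrough C :=
  fun _ _ h => congrArg (fiberMean f C) h

lemma sum_two_mul_sub_sq_le_energy (hg : g.FactorsThrough C) :
    ∑ o, (2 * (g o * f o) - g o ^ 2) ≤ energy f C := by
  rw [sum_sub_distrib, ← mul_sum, ← sum_mul_fiberMean hg, mul_sum, ← sum_sub_distrib]
  exact sum_le_sum fun o _ => by linarith [sq_nonneg (g o - fiberMean f C (C o))]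

lemma energy_eq_sum_fiberMean_mul : energy f C = ∑ o, fiberMean f C (C o) * f o := by
  rw [← sum_mul_fiberMean fiberMean_factorsThrough]
  exact sum_congr rfl fun o _ => sq _

lemma energy_le_card (h₀ : ∀ o, 0 ≤ f o) (h₁ : ∀ o, f o ≤ 1) : energy f C ≤ Fintype.card Ω := by
  rw [energy, ← card_univ, cast_card]
  refine sum_le_sum fun o _ => pow_le_one₀ (expect_nonneg fun o' _ => h₀ o') ?_
  exact expect_le ⟨o, by simp⟩ fun o' _ => h₁ o'

lemma energy_increment {β' : Type*} [DecidableEq β'] {C' : Ω → β'} {d : ℝ} (hd : 0 ≤ d)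
    {D : Finset Ω} (hCC' : C.FactorsThrough C')
    (hD : ∀ o o', C' o = C' o' → (o ∈ D ↔ o' ∈ D))
    (hmean : ∀ o ∈ D, 2 * d ≤ fiberMean f C (C o)) (hsum : ∑ o ∈ D, f o ≤ d * #D) :
    energy f C + d ^ 2 * #D ≤ energy f C' := by
  classical
  let g (o : Ω) : ℝ := fiberMean f C (C o) - if o ∈ D then d else 0
  have hg : g.FactorsThrough C' := fun o o' h => by simp only [g, hCC' h, hD o o' h]
  calc energy f C + d ^ 2 * #D
      ≤ energy f C + ∑ o ∈ D, (2 * d * fiberMean f C (C o) - 2 * d * f o - d ^ 2) := by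
        have hle : ∑ o ∈ D, (4 * d ^ 2 - 2 * d * f o - d ^ 2) ≤
            ∑ o ∈ D, (2 * d * fiberMean f C (C o) - 2 * d * f o - d ^ 2) :=
          sum_le_sum fun o ho => by linarith [mul_le_mul_of_nonneg_left (hmean o ho) hd]
        simp only [sum_sub_distrib, sum_const, nsmul_eq_mul, ← mul_sum] at hle ⊢
        linarith [mul_le_mul_of_nonneg_left hsum hd]
    _ = ∑ o, (2 * (g o * f o) - g o ^ 2) := by
        have hself : energy f C =
            ∑ o, (2 * (fiberMean f C (C o) * f o) - fiberMean f C (C o) ^ 2) := by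
          rw [sum_sub_distrib, ← mul_sum, ← energy_eq_sum_fiberMean_mul, energy]
          ring
        rw [hself, ← sum_ite_mem_eq D, ← sum_add_distrib]
        refine sum_congr rfl fun o _ => ?_
        simp only [g]
        split_ifs <;> ring
    _ ≤ energy f C' := sum_two_mul_sub_sq_le_energy hg

end Energy

section Regularity

variable {κ V ι : Type*}

/-- The vertices of colour `i`, that is, a part of the vertex partition encoded by the colouring
`c`. -/
def colorClass [Fintype V] [DecidableEq ι] (c : V → ι) (i : ι) : Finset V := {v | c v = i}

/-- One-sided regularity of the weight `f` on the tuple of vertex sets `P`: on subsets of relative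
size at least `ε`, the average of `f` is at least `d`. -/
def LowerRegular [Fintype κ] [DecidableEq κ] (f : (κ → V) → ℝ) (d ε : ℝ) (P : κ → Finset V) :
    Prop :=
  ∀ Q : κ → Finset V, (∀ k, Q k ⊆ P k) → (∀ k, ε * #(P k) ≤ #(Q k)) →
    d * #(Fintype.piFinset Q) ≤ ∑ o ∈ Fintype.piFinset Q, f o

variable [Fintype V] [DecidableEq ι]

lemma mem_colorClass {c : V → ι} {i : ι} {v : V} : v ∈ colorClass c i ↔ c v = i := by
  simp [colorClass]

variable [Fintype κ] [DecidableEq κ]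

lemma comp_eq_of_mem_piFinset {c : V → ι} {t : κ → ι} {Q : κ → Finset V}
    (hQ : ∀ k, Q k ⊆ colorClass c (t k)) {o : κ → V} (ho : o ∈ Fintype.piFinset Q) : c ∘ o = t :=
  funext fun k => (mem_colorClass (c := c)).1 (hQ k (Fintype.mem_piFinset.1 ho k))

lemma pairwiseDisjoint_piFinset {c : V → ι} {Q : (κ → ι) → κ → Finset V} {T : Finset (κ → ι)}
    (hQ : ∀ t ∈ T, ∀ k, Q t k ⊆ colorClass c (t k)) :
    (T : Set (κ → ι)).PairwiseDisjoint fun t => Fintype.piFinset (Q t) := by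
  intro t ht t' ht' hne
  refine disjoint_left.2 fun o ho ho' => hne ?_
  rw [← comp_eq_of_mem_piFinset (hQ t ht) ho, comp_eq_of_mem_piFinset (hQ t' ht') ho']

lemma card_comp_mem (c : V → ι) (T : Finset (κ → ι)) :
    #{o : κ → V | c ∘ o ∈ T} = ∑ t ∈ T, ∏ k, #(colorClass c (t k)) := by
  rw [card_eq_sum_card_fiberwise (f := (c ∘ ·)) (t := T) (by simp [Set.MapsTo])]
  refine sum_congr rfl fun t ht => ?_
  rw [← Fintype.card_piFinset]
  congr 1
  ext o
  simp only [mem_filter, mem_univ, true_and, Fintype.mem_piFinset, mem_colorClass]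
  exact ⟨fun h k => congr_fun h.2 k, fun h => by rw [show c ∘ o = t from funext h]; exact ⟨ht, rfl⟩⟩

variable [Fintype ι]

open Classical in
/-- The tuples of colours on which `f` has density at least `2 * d` but fails to be lower
regular. -/
noncomputable def irregularTuples (f : (κ → V) → ℝ) (d ε : ℝ) (c : V → ι) : Finset (κ → ι) :=
  {t | 2 * d ≤ fiberMean f (c ∘ ·) t ∧ ¬LowerRegular f d ε (colorClass c ∘ t)}

variable {f : (κ → V) → ℝ} {d ε η : ℝ} {c : V → ι}

/-- Splitting every colour class along the sets witnessing the failure of lower regularity makes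
`f` sparse on a measurable set where its mean over the old partition was at least `2 * d`. -/
lemma exists_energy_increment (hd : 0 ≤ d) (hε : 0 ≤ ε) :
    ∃ c' : V → ι × ((κ → ι) → κ → Bool), energy f (c ∘ ·) +
      d ^ 2 * (ε ^ Fintype.card κ * #{o : κ → V | c ∘ o ∈ irregularTuples f d ε c}) ≤
        energy f (c' ∘ ·) := by
  classical
  set T := irregularTuples f d ε c
  have hwit (t : κ → ι) : ∃ Q : κ → Finset V, t ∈ T →
      (∀ k, Q k ⊆ colorClass c (t k)) ∧ (∀ k, ε * #(colorClass c (t k)) ≤ #(Q k)) ∧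
        ∑ o ∈ Fintype.piFinset Q, f o < d * #(Fintype.piFinset Q) := by
    by_cases ht : t ∈ T
    · have hirr := (mem_filter_univ t |>.1 ht).2
      simp only [LowerRegular, not_forall, not_le] at hirr
      obtain ⟨Q, hsub, hlarge, hsum⟩ := hirr
      exact ⟨Q, fun _ => ⟨hsub, hlarge, hsum⟩⟩
    · exact ⟨fun _ => ∅, fun h => absurd h ht⟩
  choose Q hQ using hwit
  let D : Finset (κ → V) := T.biUnion fun t => Fintype.piFinset (Q t)
  have hdisj := pairwiseDisjoint_piFinset fun t ht => (hQ t ht).1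
  let c' (v : V) : ι × ((κ → ι) → κ → Bool) := (c v, fun t k => decide (v ∈ Q t k))
  have hc' {o o' : κ → V} (h : c' ∘ o = c' ∘ o') (k : κ) :
      c (o k) = c (o' k) ∧ ∀ t, o k ∈ Q t k ↔ o' k ∈ Q t k := by
    have hk := Prod.ext_iff.1 (congr_fun h k)
    exact ⟨hk.1, fun t => by simpa [c'] using congr_fun (congr_fun hk.2 t) k⟩
  have hcard : ε ^ Fintype.card κ * #{o : κ → V | c ∘ o ∈ T} ≤ #D := by
    rw [card_comp_mem, card_biUnion hdisj, Nat.cast_sum, Nat.cast_sum, mul_sum]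
    refine sum_le_sum fun t ht => ?_
    rw [Fintype.card_piFinset, Nat.cast_prod, Nat.cast_prod, ← card_univ, ← prod_const,
      ← prod_mul_distrib]
    exact prod_le_prod (fun k _ => by positivity) fun k _ => (hQ t ht).2.1 k
  refine ⟨c', le_trans (by gcongr) (energy_increment hd (D := D) ?_ ?_ ?_ ?_)⟩
  · exact fun o o' h => funext fun k => (hc' h k).1
  · intro o o' h
    simp only [D, mem_biUnion, Fintype.mem_piFinset, (hc' h _).2]
  · intro o ho
    obtain ⟨t, ht, ho⟩ := mem_biUnion.1 ho
    rw [comp_eq_of_mem_piFinset (hQ t ht).1 ho]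
    exact (mem_filter_univ _ |>.1 ht).1
  · rw [sum_biUnion hdisj, card_biUnion hdisj, Nat.cast_sum, mul_sum]
    exact sum_le_sum fun t ht => (hQ t ht).2.2.le

lemma exists_coloring_few_irregular_or_le_energy (κ : Type) [Fintype κ] [DecidableEq κ]
    {d ε : ℝ} (hd : 0 ≤ d) (hε : 0 ≤ ε) (η : ℝ) (n : ℕ) :
    ∃ L : ℕ, ∀ (V : Type*) [Fintype V] (f : (κ → V) → ℝ),
      ∃ (ι : Type) (_ : Fintype ι) (_ : DecidableEq ι) (c : V → ι), Fintype.card ι ≤ L ∧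
        (#{o : κ → V | c ∘ o ∈ irregularTuples f d ε c} ≤ η * Fintype.card (κ → V) ∨
          n * (d ^ 2 * (ε ^ Fintype.card κ * (η * Fintype.card (κ → V)))) ≤ energy f (c ∘ ·)) := by
  induction n with
  | zero =>
    refine ⟨1, fun V _ f => ⟨Unit, inferInstance, inferInstance, fun _ => (), by simp, .inr ?_⟩⟩
    simpa [energy] using sum_nonneg fun o _ => sq_nonneg _
  | succ n ih =>
    obtain ⟨L, hL⟩ := ih
    have hpos : 0 < (2 ^ Fintype.card κ) ^ L ^ Fintype.card κ :=
      Nat.pow_pos (Nat.pow_pos Nat.two_pos)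
    refine ⟨L * (2 ^ Fintype.card κ) ^ L ^ Fintype.card κ, fun V _ f => ?_⟩
    obtain ⟨ι, _, _, c, hι, h⟩ := hL V f
    by_cases hfew : #{o : κ → V | c ∘ o ∈ irregularTuples f d ε c} ≤ η * Fintype.card (κ → V)
    · exact ⟨ι, inferInstance, inferInstance, c, hι.trans (Nat.le_mul_of_pos_right _ hpos),
        .inl hfew⟩
    · obtain ⟨c', hc'⟩ := exists_energy_increment (f := f) (c := c) hd hε
      refine ⟨_, inferInstance, inferInstance, c', ?_, .inr (le_trans ?_ hc')⟩
      · simp only [Fintype.card_prod, Fintype.card_fun, Fintype.card_bool]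
        exact Nat.mul_le_mul hι
          (Nat.pow_le_pow_right (Nat.pow_pos Nat.two_pos) (Nat.pow_le_pow_left hι _))
      · have henergy := h.resolve_left hfew
        push_cast
        rw [add_one_mul]
        gcongr
        exact (not_le.1 hfew).le

lemma exists_coloring_few_irregular (κ : Type) [Fintype κ] [DecidableEq κ] {d ε η : ℝ}
    (hd : 0 < d) (hε : 0 < ε) (hη : 0 < η) :
    ∃ L : ℕ, ∀ (V : Type*) [Fintype V] (f : (κ → V) → ℝ), (∀ o, 0 ≤ f o) → (∀ o, f o ≤ 1) →
      ∃ (ι : Type) (_ : Fintype ι) (_ : DecidableEq ι) (c : V → ι), Fintype.card ι ≤ L ∧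
        #{o : κ → V | c ∘ o ∈ irregularTuples f d ε c} ≤ η * Fintype.card (κ → V) := by
  obtain ⟨n, hn⟩ := exists_nat_gt (1 / (d ^ 2 * (ε ^ Fintype.card κ * η)))
  obtain ⟨L, hL⟩ := exists_coloring_few_irregular_or_le_energy κ hd.le hε.le η n
  refine ⟨L, fun V _ f h₀ h₁ => ?_⟩
  obtain ⟨ι, _, _, c, hι, hfew⟩ := hL V f
  refine ⟨ι, inferInstance, inferInstance, c, hι, hfew.elim id fun henergy => ?_⟩
  have hempty : (Fintype.card (κ → V) : ℝ) ≤ 0 := by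
    rw [div_lt_iff₀ (by positivity)] at hn
    have := henergy.trans (energy_le_card h₀ h₁)
    by_contra! hpos
    nlinarith
  calc (#{o : κ → V | c ∘ o ∈ irregularTuples f d ε c} : ℝ)
      ≤ Fintype.card (κ → V) := Nat.cast_le.2 (card_le_univ _)
    _ ≤ 0 := hempty
    _ ≤ η * Fintype.card (κ → V) := by positivity

open Classical in
/-- The irregular tuples of colours carry little weight: either they are among the few
`irregularTuples`, or the mean of `f` on them is below `2 * d`. -/
lemma exists_regular_coloring (κ : Type) [Fintype κ] [DecidableEq κ] {d ε η : ℝ}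
    (hd : 0 < d) (hε : 0 < ε) (hη : 0 < η) :
    ∃ L : ℕ, ∀ (V : Type*) [Fintype V] (f : (κ → V) → ℝ), (∀ o, 0 ≤ f o) → (∀ o, f o ≤ 1) →
      ∃ (ι : Type) (_ : Fintype ι) (_ : DecidableEq ι) (c : V → ι), Fintype.card ι ≤ L ∧
        ∑ o with ¬LowerRegular f d ε (colorClass c ∘ c ∘ o), f o ≤
          (2 * d + η) * Fintype.card (κ → V) := by
  obtain ⟨L, hL⟩ := exists_coloring_few_irregular κ hd hε hη
  refine ⟨L, fun V _ f h₀ h₁ => ?_⟩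
  obtain ⟨ι, _, _, c, hι, hfew⟩ := hL V f h₀ h₁
  refine ⟨ι, inferInstance, inferInstance, c, hι, ?_⟩
  let g (o : κ → V) : ℝ := if LowerRegular f d ε (colorClass c ∘ c ∘ o) then 0 else 1
  have hg : g.FactorsThrough (c ∘ ·) := fun o o' h => by
    simp only [g, show c ∘ o = c ∘ o' from h]
  have hmean (o : κ → V) : g o * fiberMean f (c ∘ ·) (c ∘ o) ≤
      2 * d + if c ∘ o ∈ irregularTuples f d ε c then 1 else 0 := by
    have hle_one : fiberMean f (c ∘ ·) (c ∘ o) ≤ 1 := expect_le ⟨o, by simp⟩ fun o' _ => h₁ o'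
    by_cases hreg : LowerRegular f d ε (colorClass c ∘ c ∘ o)
    · simp only [g, if_pos hreg, zero_mul]
      positivity
    · by_cases hdense : 2 * d ≤ fiberMean f (c ∘ ·) (c ∘ o)
      · rw [if_pos (by simp [irregularTuples, hdense, hreg])]
        simp only [g, if_neg hreg, one_mul]
        linarith
      · simp only [g, if_neg hreg, one_mul]
        split_ifs <;> linarith
  calc ∑ o with ¬LowerRegular f d ε (colorClass c ∘ c ∘ o), f o
      = ∑ o, g o * fiberMean f (c ∘ ·) (c ∘ o) := by
        rw [sum_mul_fiberMean hg, sum_filter]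
        simp only [g, ite_not, ite_mul, zero_mul, one_mul]
    _ ≤ ∑ o : κ → V, (2 * d + if c ∘ o ∈ irregularTuples f d ε c then 1 else 0) :=
        sum_le_sum fun o _ => hmean o
    _ = 2 * d * Fintype.card (κ → V) + #{o : κ → V | c ∘ o ∈ irregularTuples f d ε c} := by
        rw [sum_add_distrib, sum_const, sum_boole, nsmul_eq_mul, card_univ, mul_comm]
    _ ≤ (2 * d + η) * Fintype.card (κ → V) := by rw [add_mul]; gcongr

end Regularity

section Embedding

lemma LowerRegular.comp_perm {κ V : Type*} [Fintype κ] [DecidableEq κ] {f : (κ → V) → ℝ} {d ε : ℝ}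
    {P : κ → Finset V} (h : LowerRegular f d ε P) {σ : Equiv.Perm κ} (hf : ∀ o, f (o ∘ σ) = f o) :
    LowerRegular f d ε (P ∘ σ) := by
  intro Q hQ hcard
  have hsum : ∑ o ∈ Fintype.piFinset (Q ∘ σ.symm), f o = ∑ o ∈ Fintype.piFinset Q, f o := by
    refine sum_equiv (σ.symm.arrowCongr (Equiv.refl V)) (fun o => ?_) fun o _ => (hf o).symm
    simpa [Fintype.mem_piFinset] using σ.symm.forall_congr fun k => by simp
  have hpi : #(Fintype.piFinset (Q ∘ σ.symm)) = #(Fintype.piFinset Q) := by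
    simpa using σ.symm.prod_comp fun k => #(Q k)
  rw [← hsum, ← hpi]
  exact h _ (fun k => by simpa using hQ (σ.symm k)) fun k => by simpa using hcard (σ.symm k)

lemma exists_ne_card_common_neighbors {α β : Type*} {s : Finset α} {t : Finset β}
    {r : α → β → Prop} [DecidableRel r] {d : ℝ} (hd : 0 ≤ d) (hs : s.Nonempty)
    (ht : 2 < d ^ 2 * #t) (hdense : d * #s * #t ≤ ∑ a ∈ s, (#{b ∈ t | r a b} : ℝ)) :
    ∃ b ∈ t, ∃ b' ∈ t, b ≠ b' ∧ d ^ 2 / 2 * #s ≤ #{a ∈ s | r a b ∧ r a b'} := by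
  classical
  by_contra! hsparse
  set D := ∑ a ∈ s, (#{b ∈ t | r a b} : ℝ)
  have hs₀ : (0 : ℝ) < #s := by exact_mod_cast hs.card_pos
  have ht₀ : (0 : ℝ) < #t := by by_contra! h; nlinarith [sq_nonneg d]
  have hD : D ≤ #s * #t := by
    rw [← nsmul_eq_mul]
    exact sum_le_card_nsmul _ _ _ fun a _ => by exact_mod_cast card_filter_le _ _
  have hsq : ∑ a ∈ s, (#{b ∈ t | r a b} : ℝ) ^ 2 =
      D + ∑ p ∈ t.offDiag, (#{a ∈ s | r a p.1 ∧ r a p.2} : ℝ) := by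
    have hcount := sum_card_bipartiteAbove_eq_sum_card_bipartiteBelow (s := s) (t := t.offDiag)
      fun a p => r a p.1 ∧ r a p.2
    simp only [bipartiteBelow] at hcount
    rw [← Nat.cast_sum, ← hcount, Nat.cast_sum, ← sum_add_distrib]
    refine sum_congr rfl fun a _ => ?_
    have hoff : t.offDiag.bipartiteAbove (fun a p => r a p.1 ∧ r a p.2) a =
        {b ∈ t | r a b}.offDiag := by
      ext p
      simp only [mem_bipartiteAbove, mem_offDiag, mem_filter]
      tauto
    rw [hoff, offDiag_card, Nat.cast_sub (Nat.le_mul_self _)]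
    push_cast
    ring
  have hpairs : ∑ p ∈ t.offDiag, (#{a ∈ s | r a p.1 ∧ r a p.2} : ℝ) ≤
      #t ^ 2 * (d ^ 2 / 2 * #s) := by
    have hle : (#t.offDiag : ℝ) ≤ #t ^ 2 := by
      rw [sq]; exact_mod_cast offDiag_card t ▸ Nat.sub_le _ _
    refine (sum_le_card_nsmul _ _ (d ^ 2 / 2 * #s) fun p hp => ?_).trans ?_
    · obtain ⟨h₁, h₂, hne⟩ := mem_offDiag.1 hp
      exact (hsparse _ h₁ _ h₂ hne).le
    · rw [nsmul_eq_mul]; gcongr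
  have hcs : (d * #s * #t) ^ 2 ≤ #s * (#s * #t + #t ^ 2 * (d ^ 2 / 2 * #s)) :=
    calc (d * #s * #t) ^ 2 ≤ D ^ 2 := by gcongr
      _ ≤ #s * ∑ a ∈ s, (#{b ∈ t | r a b} : ℝ) ^ 2 := sq_sum_le_card_mul_sum_sq
      _ ≤ #s * (#s * #t + #t ^ 2 * (d ^ 2 / 2 * #s)) := by rw [hsq]; gcongr
  nlinarith [mul_pos (mul_pos hs₀ hs₀) ht₀]

lemma exists_mem_fst_notMem_snd_notMem {α : Type*} {X Y F : Finset α}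
    {P : Finset (α × α)} (hP : P ⊆ X ×ˢ Y) (hcard : #F * (#X + #Y) < #P) :
    ∃ p ∈ P, p.1 ∉ F ∧ p.2 ∉ F := by
  classical
  by_contra! hF
  have hsub : P ⊆ F ×ˢ Y ∪ X ×ˢ F := fun p hp => by
    have hXY := mem_product.1 (hP hp)
    by_cases h : p.1 ∈ F
    · exact mem_union_left _ (mem_product.2 ⟨h, hXY.2⟩)
    · exact mem_union_right _ (mem_product.2 ⟨hXY.1, hF p hp h⟩)
  have := (card_le_card hsub).trans (card_union_le _ _)
  rw [card_product, card_product] at this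
  linarith

variable {V : Type*} [DecidableEq V]

/-- The indicator function of the edge set of a `3`-uniform hypergraph, on ordered triples. -/
def edgeIndicator (H : Finset (Finset V)) (o : Fin 3 → V) : ℝ := if univ.image o ∈ H then 1 else 0

lemma edgeIndicator_nonneg (H : Finset (Finset V)) (o : Fin 3 → V) : 0 ≤ edgeIndicator H o := by
  unfold edgeIndicator
  split_ifs <;> norm_num

lemma edgeIndicator_le_one (H : Finset (Finset V)) (o : Fin 3 → V) : edgeIndicator H o ≤ 1 := by
  unfold edgeIndicator
  split_ifs <;> norm_num

lemma edgeIndicator_vecCons (H : Finset (Finset V)) (a b c : V) :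
    edgeIndicator H ![a, b, c] = if {a, b, c} ∈ H then 1 else 0 := by
  simp [edgeIndicator, Fin.univ_succ]

lemma edgeIndicator_comp_perm (H : Finset (Finset V)) (σ : Equiv.Perm (Fin 3)) (o : Fin 3 → V) :
    edgeIndicator H (o ∘ σ) = edgeIndicator H o := by
  rw [edgeIndicator, ← image_image, image_univ_equiv, edgeIndicator]

lemma sum_piFinset_edgeIndicator (H : Finset (Finset V)) (Q : Fin 3 → Finset V) :
    ∑ o ∈ Fintype.piFinset Q, edgeIndicator H o =
      ∑ p ∈ Q 0 ×ˢ Q 1, (#{z ∈ Q 2 | {p.1, p.2, z} ∈ H} : ℝ) := by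
  simp only [← sum_boole, ← edgeIndicator_vecCons]
  rw [← sum_product']
  refine sum_nbij' (fun o => ((o 0, o 1), o 2)) (fun q => ![q.1.1, q.1.2, q.2]) ?_ ?_ ?_ ?_ ?_
  · simp +contextual [Fintype.mem_piFinset, Fin.forall_fin_succ]
  · simp +contextual [Fintype.mem_piFinset, Fin.forall_fin_succ]
  · exact fun o _ => by ext k; fin_cases k <;> rfl
  · simp
  · exact fun o _ => congrArg _ (by ext k; fin_cases k <;> rfl)

lemma exists_common_link_avoiding {H : Finset (Finset V)} {d : ℝ} (hd : 0 ≤ d)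
    {Q : Fin 3 → Finset V} (hQ : ∀ k, 32 ≤ d ^ 2 * #(Q k))
    (hdense : d * #(Fintype.piFinset Q) ≤ ∑ o ∈ Fintype.piFinset Q, edgeIndicator H o) :
    ∃ z ∈ Q 2, ∃ z' ∈ Q 2, z ≠ z' ∧ ∀ F : Finset V, #F ≤ 6 → ∃ p ∈ Q 0 ×ˢ Q 1,
      ({p.1, p.2, z} ∈ H ∧ {p.1, p.2, z'} ∈ H) ∧ p.1 ∉ F ∧ p.2 ∉ F := by
  have hpos (k : Fin 3) : 0 < (#(Q k) : ℝ) := by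
    by_contra! h
    nlinarith [hQ k, sq_nonneg d]
  have hcard : d * #(Q 0 ×ˢ Q 1) * #(Q 2) ≤
      ∑ p ∈ Q 0 ×ˢ Q 1, (#{z ∈ Q 2 | {p.1, p.2, z} ∈ H} : ℝ) := by
    rw [← sum_piFinset_edgeIndicator]
    refine le_of_eq_of_le ?_ hdense
    rw [Fintype.card_piFinset, Fin.prod_univ_three, card_product]
    push_cast
    ring
  obtain ⟨z, hz, z', hz', hne, hcommon⟩ := exists_ne_card_common_neighbors hd
    (card_pos.1 (by rw [card_product]; exact_mod_cast mul_pos (hpos 0) (hpos 1)))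
    (by linarith [hQ 2]) hcard
  refine ⟨z, hz, z', hz', hne, fun F hF => ?_⟩
  obtain ⟨p, hp, hpF⟩ := exists_mem_fst_notMem_snd_notMem (F := F) (filter_subset
    (fun p => {p.1, p.2, z} ∈ H ∧ {p.1, p.2, z'} ∈ H) (Q 0 ×ˢ Q 1))
    ((Nat.mul_le_mul_right _ hF).trans_lt (by
      rify
      rw [card_product, Nat.cast_mul] at hcommon
      linarith [mul_le_mul_of_nonneg_right (hQ 0) (hpos 1).le,
        mul_le_mul_of_nonneg_right (hQ 1) (hpos 0).le, hpos 0, hpos 1]))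
  obtain ⟨hpQ, hpH⟩ := mem_filter.1 hp
  exact ⟨p, hpQ, hpH, hpF⟩

/-- Two vertices `z`, `z'` of the third part have many common neighbouring pairs, and three disjoint
ones of these make up a copy of `M` together with `z` and `z'`. -/
lemma exists_isMCopy_of_dense {V : Type} [DecidableEq V] {H : Finset (Finset V)}
    (hH : ∀ e ∈ H, #e = 3) {d : ℝ} (hd : 0 ≤ d) {Q : Fin 3 → Finset V}
    (hQ : ∀ k, 32 ≤ d ^ 2 * #(Q k))
    (hdense : d * #(Fintype.piFinset Q) ≤ ∑ o ∈ Fintype.piFinset Q, edgeIndicator H o) :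
    ∃ g : Fin 8 → V, IsMCopy H g ∧ ∀ a, g a ∈ Q (slot a) := by
  obtain ⟨z, hz, z', hz', hzz', hpick⟩ := exists_common_link_avoiding hd hQ hdense
  obtain ⟨p, hp, ⟨hpz, -⟩, hp₁, hp₂⟩ := hpick {z, z'} (card_le_two.trans (by norm_num))
  obtain ⟨q, hq, ⟨hqz, hqz'⟩, hq₁, hq₂⟩ :=
    hpick {z, z', p.1, p.2} (card_le_four.trans (by norm_num))
  obtain ⟨r, hr, ⟨hrz, hrz'⟩, hr₁, hr₂⟩ := hpick {z, z', p.1, p.2, q.1, q.2} card_le_six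
  have hne {x : V × V} (hx : {x.1, x.2, z} ∈ H) : x.1 ≠ x.2 := fun h => by
    have hcard := hH _ hx
    rw [h, insert_eq_of_mem (mem_insert_self _ _)] at hcard
    linarith [card_le_two (a := x.2) (b := z)]
  have hnodup : [p.1, p.2, z, q.1, q.2, z', r.1, r.2].Nodup := by
    simp only [mem_insert, mem_singleton, not_or] at hp₁ hp₂ hq₁ hq₂ hr₁ hr₂
    simp [*, Ne.symm, hne hpz, hne hqz, hne hrz]
  have hrot (a b c : V) : ({a, b, c} : Finset V) = {b, c, a} := by rw [insert_comm, pair_comm]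
  refine ⟨![p.1, p.2, z, q.1, q.2, z', r.1, r.2], ⟨List.nodup_ofFn.1 hnodup, hpz,
    (hrot z q.1 q.2).symm ▸ hqz, hqz', (hrot z' r.1 r.2).symm ▸ hrz'⟩, ?_⟩
  simp only [mem_product] at hp hq hr
  simp [Fin.forall_fin_succ, slot, *]

end Embedding

section Tiling

variable {V : Type} [DecidableEq V] {H : Finset (Finset V)}

/-- The family `gs` is a tiling of the hypergraph `H` with vertex-disjoint copies of `M`. -/
def IsMTiling {J : Type*} (H : Finset (Finset V)) (gs : J → Fin 8 → V) : Prop :=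
  (∀ i, IsMCopy H (gs i)) ∧ ∀ i j, i ≠ j → ∀ a b, gs i a ≠ gs j b

/-- The set of vertices covered by a family of copies of `M`. -/
def covered {J : Type*} [Fintype J] (gs : J → Fin 8 → V) : Finset V :=
  univ.biUnion fun i => univ.image (gs i)

lemma mem_covered {J : Type*} [Fintype J] {gs : J → Fin 8 → V} {v : V} :
    v ∈ covered gs ↔ ∃ i a, gs i a = v := by
  simp [covered]

lemma IsMTiling.card_covered {J : Type*} [Fintype J] {gs : J → Fin 8 → V} (h : IsMTiling H gs) :
    #(covered gs) = 8 * Fintype.card J := by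
  rw [covered, card_biUnion]
  · simp [card_image_of_injective _ (h.1 _).1, mul_comm]
  · intro i _ j _ hij
    simpa [disjoint_left] using fun a b => (h.2 i j hij a b).symm

lemma IsMTiling.cons {q : ℕ} {gs : Fin q → Fin 8 → V} (h : IsMTiling H gs) {g : Fin 8 → V}
    (hg : IsMCopy H g) (hdisj : ∀ a, g a ∉ covered gs) :
    IsMTiling H (Fin.cons g gs : Fin (q + 1) → Fin 8 → V) := by
  have hne (a : Fin 8) (j : Fin q) (b : Fin 8) : g a ≠ gs j b := fun hab =>
    hdisj a (mem_covered.2 ⟨j, b, hab.symm⟩)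
  refine ⟨Fin.cases hg h.1, fun i j hij => ?_⟩
  cases i using Fin.cases <;> cases j using Fin.cases
  · exact absurd rfl hij
  · exact fun a b => hne a _ b
  · exact fun a b => (hne b _ a).symm
  · exact h.2 _ _ fun h => hij (congrArg Fin.succ h)

variable {ι : Type*} [DecidableEq ι] {P : ι → Finset V} {d ε : ℝ}

lemma card_inter_covered_le {J : Type*} [Fintype J] (hP : Pairwise fun i j => Disjoint (P i) (P j))
    {t : J → Fin 3 → ι} {gs : J → Fin 8 → V} (hgs : ∀ j a, gs j a ∈ P (t j (slot a))) (p : ι) :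
    #(P p ∩ covered gs) ≤ ∑ j, load (t j) p := by
  have hsub : P p ∩ covered gs ⊆
      univ.biUnion fun j => ({a | t j (slot a) = p} : Finset (Fin 8)).image (gs j) := by
    intro v hv
    obtain ⟨hvp, hv⟩ := mem_inter.1 hv
    obtain ⟨j, a, rfl⟩ := mem_covered.1 hv
    have : t j (slot a) = p := by_contra fun hne => disjoint_left.1 (hP hne) (hgs j a) hvp
    exact mem_biUnion.2 ⟨j, mem_univ _, mem_image_of_mem _ ((mem_filter_univ a).2 this)⟩
  exact (card_le_card hsub).trans (card_biUnion_le.trans (sum_le_sum fun j _ => card_image_le))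

/-- Greedily, since a copy of `M` can still be found when a `1 - ε` proportion of each cluster has
been used. -/
lemma exists_isMTiling_of_load_le (hH : ∀ e ∈ H, #e = 3) (hd : 0 ≤ d)
    (hP : Pairwise fun i j => Disjoint (P i) (P j)) {q : ℕ} (t : Fin q → Fin 3 → ι)
    (hreg : ∀ j, LowerRegular (edgeIndicator H) d ε (P ∘ t j))
    (hlarge : ∀ j k, 32 ≤ d ^ 2 * (ε * #(P (t j k))))
    (hload : ∀ p, ∑ j, (load (t j) p : ℝ) ≤ (1 - ε) * #(P p)) :
    ∃ gs : Fin q → Fin 8 → V, IsMTiling H gs ∧ ∀ j a, gs j a ∈ P (t j (slot a)) := by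
  induction q with
  | zero => exact ⟨Fin.elim0, ⟨fun i => i.elim0, fun i => i.elim0⟩, fun i => i.elim0⟩
  | succ q ih =>
    simp only [Fin.sum_univ_succ] at hload
    obtain ⟨gs, htiling, hgs⟩ := ih (fun j => t j.succ) (fun j => hreg _) (fun j => hlarge _)
      fun p => by linarith [hload p, (load (t 0) p).cast_nonneg (α := ℝ)]
    let Q (k : Fin 3) : Finset V := P (t 0 k) \ covered gs
    have hQ (k : Fin 3) : ε * #(P (t 0 k)) ≤ #(Q k) := by
      have hsdiff : (#(Q k) : ℝ) + #(P (t 0 k) ∩ covered gs) = #(P (t 0 k)) := by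
        exact_mod_cast card_sdiff_add_card_inter _ _
      have hused : (#(P (t 0 k) ∩ covered gs) : ℝ) ≤
          ∑ j : Fin q, (load (t j.succ) (t 0 k) : ℝ) := by
        exact_mod_cast card_inter_covered_le hP hgs (t 0 k)
      linarith [hload (t 0 k), (load (t 0) (t 0 k)).cast_nonneg (α := ℝ)]
    obtain ⟨g, hg, hgQ⟩ := exists_isMCopy_of_dense hH hd
      (fun k => (hlarge 0 k).trans (by gcongr; exact hQ k))
      (hreg 0 Q (fun k => sdiff_subset) hQ)
    exact ⟨Fin.cons g gs, htiling.cons hg fun a => (mem_sdiff.1 (hgQ a)).2,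
      Fin.cases (fun a => (mem_sdiff.1 (hgQ a)).1) hgs⟩

/-- Place `⌊(1 - ε) * w t⌋₊` copies of `M` along each triple `t`. -/
lemma exists_isMTiling_of_fractional (hH : ∀ e ∈ H, #e = 3) (hd : 0 ≤ d) (hε : ε ≤ 1)
    (hP : Pairwise fun i j => Disjoint (P i) (P j)) {T : Type*} [Fintype T] {t : T → Fin 3 → ι}
    (hreg : ∀ j, LowerRegular (edgeIndicator H) d ε (P ∘ t j))
    (hlarge : ∀ j k, 32 ≤ d ^ 2 * (ε * #(P (t j k)))) {w : T → ℝ} (hw : ∀ j, 0 ≤ w j)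
    (hload : ∀ p, ∑ j, w j * load (t j) p ≤ #(P p)) :
    ∃ (q : ℕ) (gs : Fin q → Fin 8 → V), IsMTiling H gs ∧
      (1 - ε) * ∑ j, w j ≤ q + Fintype.card T := by
  let m (j : T) : ℕ := ⌊(1 - ε) * w j⌋₊
  let e := Fintype.equivFin (Σ j, Fin (m j))
  obtain ⟨gs, hgs, -⟩ := exists_isMTiling_of_load_le hH hd hP (fun i => t (e.symm i).1)
    (fun i => hreg _) (fun i => hlarge _) fun p => by
      calc ∑ i, (load (t (e.symm i).1) p : ℝ)
          = ∑ j, m j * (load (t j) p : ℝ) := by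
            rw [e.symm.sum_comp fun x => (load (t x.1) p : ℝ), Fintype.sum_sigma]
            simp
        _ ≤ ∑ j, (1 - ε) * w j * load (t j) p := by
            gcongr with j
            exact Nat.floor_le (mul_nonneg (sub_nonneg.2 hε) (hw j))
        _ ≤ (1 - ε) * #(P p) := by
            simp only [mul_assoc, ← mul_sum]
            exact mul_le_mul_of_nonneg_left (hload p) (sub_nonneg.2 hε)
  refine ⟨_, gs, hgs, ?_⟩
  have hfloor : ∑ j, (1 - ε) * w j ≤ ∑ j, ((m j : ℝ) + 1) :=
    sum_le_sum fun j _ => (Nat.lt_floor_add_one _).le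
  simpa [mul_sum, sum_add_distrib] using hfloor

end Tiling

section TypicalColors

variable {V ι : Type*} [Fintype V] [DecidableEq ι]

lemma sum_fun_fin_three (F : (Fin 3 → V) → ℝ) :
    ∑ o, F o = ∑ x, ∑ p : V × V, F ![x, p.1, p.2] := by
  rw [← Fintype.sum_prod_type']
  refine Fintype.sum_equiv ⟨fun o => (o 0, o 1, o 2), fun q => ![q.1, q.2.1, q.2.2], fun o => ?_,
    fun q => rfl⟩ _ _ fun o => congrArg F ?_
  all_goals ext k; fin_cases k <;> rfl

lemma sum_comp_color [Fintype ι] (c : V → ι) (F : ι → ℝ) :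
    ∑ v, F (c v) = ∑ i, #(colorClass c i) * F i := by
  simp only [← sum_fiberwise' univ c F, sum_const, nsmul_eq_mul, colorClass]

lemma sum_comp_color_pair [Fintype ι] (c : V → ι) (F : ι → ι → ℝ) :
    ∑ p : V × V, F (c p.1) (c p.2) =
      ∑ i, ∑ j, #(colorClass c i) * #(colorClass c j) * F i j := by
  rw [Fintype.sum_prod_type, sum_comp_color c fun i => ∑ v, F i (c v)]
  simp only [sum_comp_color c (F _), mul_sum, mul_assoc]

/-- The sizes of the clusters with colours in `G`, extended by `0` to all colours. -/
def clusterWeight (c : V → ι) (G : Finset ι) (i : ι) : ℝ :=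
  if i ∈ G then #(colorClass c i) else 0

lemma sum_clusterWeight [Fintype ι] (c : V → ι) (G : Finset ι) :
    ∑ i, clusterWeight c G i = #{v | c v ∈ G} := by
  have := sum_comp_color c fun i => if i ∈ G then 1 else 0
  simpa [clusterWeight] using this.symm

lemma le_sum_clusterWeight [Fintype ι] {c : V → ι} {G : Finset ι} {b : ℝ}
    (hG : (#{v | c v ∉ G} : ℝ) ≤ b * Fintype.card V) :
    (1 - b) * Fintype.card V ≤ ∑ i, clusterWeight c G i := by
  have hcard : (#{v | c v ∈ G} : ℝ) + #{v | c v ∉ G} = Fintype.card V := by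
    exact_mod_cast card_filter_add_card_filter_not fun v => c v ∈ G
  rw [sum_clusterWeight]
  linarith

variable [DecidableEq V] {H : Finset (Finset V)}
  {d ε μ : ℝ} {c : V → ι} {N : ℕ}

lemma two_mul_degree_le (hH : ∀ e ∈ H, #e = 3) (v : V) :
    2 * (#{e ∈ H | v ∈ e} : ℝ) ≤ ∑ p : V × V, edgeIndicator H ![v, p.1, p.2] := by
  have hmaps (p : V × V) (hp : p ∈ ({p | {v, p.1, p.2} ∈ H} : Finset (V × V))) :
      ({v, p.1, p.2} : Finset V) ∈ ({e ∈ H | v ∈ e} : Finset (Finset V)) := by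
    simpa using hp
  simp only [edgeIndicator_vecCons, sum_boole]
  rw [card_eq_sum_card_fiberwise hmaps, mul_comm]
  norm_cast
  refine card_nsmul_le_sum _ _ 2 fun e he => ?_
  obtain ⟨heH, hve⟩ := mem_filter.1 he
  obtain ⟨a, b, hab, hpair⟩ := card_eq_two.1 (by rw [card_erase_of_mem hve, hH e heH])
  have hve' : {v, a, b} = e := by rw [← hpair, insert_erase hve]
  have hsub : {(a, b), (b, a)} ⊆ ({p | {v, p.1, p.2} ∈ H} : Finset (V × V)).filter
      fun p => {v, p.1, p.2} = e := by
    simp [insert_subset_iff, pair_comm b a, hve', heH]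
  exact (card_pair (by simp [hab])).symm.trans_le (card_le_card hsub)

open Classical in
/-- The number of ordered edges that start at `x` and lie in an irregular triple of clusters. -/
noncomputable def irregularDegree (H : Finset (Finset V)) (d ε : ℝ) (c : V → ι) (x : V) : ℝ :=
  ∑ p : V × V, if LowerRegular (edgeIndicator H) d ε (colorClass c ∘ c ∘ ![x, p.1, p.2]) then 0
    else edgeIndicator H ![x, p.1, p.2]

lemma irregularDegree_nonneg (x : V) : 0 ≤ irregularDegree H d ε c x :=
  sum_nonneg fun p _ => by split_ifs; exacts [le_rfl, edgeIndicator_nonneg H _]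

open Classical in
/-- The colours of the clusters that have at least `N` vertices and contain a vertex of small
irregular degree. -/
noncomputable def typicalColors [Fintype ι] (H : Finset (Finset V)) (d ε μ : ℝ) (N : ℕ)
    (c : V → ι) : Finset ι :=
  {i | N ≤ #(colorClass c i) ∧ ∃ x, c x = i ∧ irregularDegree H d ε c x ≤ μ * Fintype.card V ^ 2}

open Classical in
lemma card_comp_notMem_typicalColors_le [Fintype ι] [Nonempty V] (hμ : 0 < μ)
    (hirr : ∑ o with ¬LowerRegular (edgeIndicator H) d ε (colorClass c ∘ c ∘ o),
      edgeIndicator H o ≤ μ ^ 2 * Fintype.card V ^ 3)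
    (hN : Fintype.card ι * N ≤ μ * Fintype.card V) :
    (#{v | c v ∉ typicalColors H d ε μ N c} : ℝ) ≤ 2 * μ * Fintype.card V := by
  set n := (Fintype.card V : ℝ)
  have hn : 0 < n := Nat.cast_pos.2 Fintype.card_pos
  let small : Finset V := {v | #(colorClass c (c v)) < N}
  let bad : Finset V := {x | μ * n ^ 2 < irregularDegree H d ε c x}
  have hsub : ({v | c v ∉ typicalColors H d ε μ N c} : Finset V) ⊆ small ∪ bad := by
    intro v hv
    simp only [typicalColors, mem_filter_univ, not_and_or, not_exists, not_le] at hv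
    simp only [small, bad, mem_union, mem_filter_univ]
    exact hv.imp_right fun h => (h v).resolve_left fun hne => hne rfl
  have hsmall : (#small : ℝ) ≤ μ * n := by
    refine le_trans ?_ hN
    rw [mul_comm]
    exact_mod_cast card_le_mul_card_image_of_maps_to (f := c) (fun v _ => mem_univ (c v)) N
      fun i _ => by
        by_contra! hlt
        obtain ⟨v, hv⟩ := card_pos.1 (Nat.zero_le N |>.trans_lt hlt)
        obtain ⟨hvs, rfl⟩ := mem_filter.1 hv
        refine hlt.not_ge ((card_le_card fun u hu => ?_).trans ((mem_filter_univ v).1 hvs).le)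
        exact mem_colorClass.2 (mem_filter.1 hu).2
  have hbad : #bad * (μ * n ^ 2) ≤ μ * n * (μ * n ^ 2) :=
    calc #bad * (μ * n ^ 2) ≤ ∑ x ∈ bad, irregularDegree H d ε c x := by
          rw [← nsmul_eq_mul]
          exact card_nsmul_le_sum _ _ _ fun x hx => ((mem_filter_univ x).1 hx).le
      _ ≤ ∑ x, irregularDegree H d ε c x :=
          sum_le_sum_of_subset_of_nonneg (subset_univ _) fun x _ _ => irregularDegree_nonneg x
      _ ≤ μ ^ 2 * n ^ 3 := by
          rw [sum_filter, sum_fun_fin_three] at hirr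
          simpa only [irregularDegree, ite_not] using hirr
      _ = μ * n * (μ * n ^ 2) := by ring
  have hunion : (#{v | c v ∉ typicalColors H d ε μ N c} : ℝ) ≤ #small + #bad := by
    exact_mod_cast (card_le_card hsub).trans (card_union_le _ _)
  linarith [le_of_mul_le_mul_right hbad (by positivity)]

/-- The edges of the cluster hypergraph: the lower regular triples of colours in `G`. -/
def IsClusterEdge (H : Finset (Finset V)) (d ε : ℝ) (c : V → ι) (G : Finset ι) (t : Fin 3 → ι) :
    Prop :=
  LowerRegular (edgeIndicator H) d ε (colorClass c ∘ t) ∧ ∀ k, t k ∈ G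

lemma IsClusterEdge.swap {G : Finset ι} {i j k : ι} (h : IsClusterEdge H d ε c G ![i, j, k]) :
    IsClusterEdge H d ε c G ![i, k, j] := by
  have hswap : ![i, k, j] = ![i, j, k] ∘ Equiv.swap 1 2 := by ext a; fin_cases a <;> rfl
  rw [hswap]
  exact ⟨h.1.comp_perm (edgeIndicator_comp_perm H _), fun a => h.2 _⟩

open Classical in
lemma sum_edgeIndicator_le [Fintype ι] {G : Finset ι} {x : V} (hx : c x ∈ G) :
    ∑ p : V × V, edgeIndicator H ![x, p.1, p.2] ≤
      irregularDegree H d ε c x + 2 * #{v | c v ∉ G} * Fintype.card V +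
        ∑ j, ∑ k, if IsClusterEdge H d ε c G ![c x, j, k]
          then clusterWeight c G j * clusterWeight c G k else 0 := by
  let R (j k : ι) : Prop := IsClusterEdge H d ε c G ![c x, j, k]
  let u (v : V) : ℝ := if c v ∉ G then 1 else 0
  have hR (p : V × V) : R (c p.1) (c p.2) ↔
      LowerRegular (edgeIndicator H) d ε (colorClass c ∘ c ∘ ![x, p.1, p.2]) ∧
        c p.1 ∈ G ∧ c p.2 ∈ G := by
    have hcomp : c ∘ ![x, p.1, p.2] = ![c x, c p.1, c p.2] := by ext k; fin_cases k <;> rfl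
    simp [R, IsClusterEdge, Fin.forall_fin_succ, hcomp, hx]
  have hterm (p : V × V) : edgeIndicator H ![x, p.1, p.2] ≤
      (if LowerRegular (edgeIndicator H) d ε (colorClass c ∘ c ∘ ![x, p.1, p.2]) then 0
        else edgeIndicator H ![x, p.1, p.2]) + (u p.1 + u p.2) +
        if R (c p.1) (c p.2) then 1 else 0 := by
    simp only [edgeIndicator, u, hR]
    split_ifs <;> simp_all
  have hU : ∑ p : V × V, (u p.1 + u p.2) = 2 * #{v | c v ∉ G} * Fintype.card V := by
    rw [← sum_boole, Fintype.sum_prod_type]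
    simp only [sum_add_distrib, sum_const, card_univ, nsmul_eq_mul, ← mul_sum, u]
    ring
  have hcluster : ∑ p : V × V, (if R (c p.1) (c p.2) then (1 : ℝ) else 0) =
      ∑ j, ∑ k, if R j k then clusterWeight c G j * clusterWeight c G k else 0 := by
    rw [sum_comp_color_pair c fun j k => if R j k then (1 : ℝ) else 0]
    refine sum_congr rfl fun j _ => sum_congr rfl fun k _ => ?_
    split_ifs with h
    · simp [clusterWeight, show j ∈ G from h.2 1, show k ∈ G from h.2 2]
    · simp
  rw [irregularDegree, ← hU, ← hcluster, ← sum_add_distrib, ← sum_add_distrib]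
  exact sum_le_sum fun p _ => hterm p

variable [Fintype ι]

open Classical in
/-- The link of a typical cluster inherits the density of the link of one of its vertices. -/
lemma lt_sum_clusterWeight_mul {δ : ℝ} (hδ : 0 ≤ δ)
    (hG : (#{v | c v ∉ typicalColors H d ε μ N c} : ℝ) ≤ 2 * μ * Fintype.card V)
    (hdeg : ∀ x, (δ + 5 * μ) * Fintype.card V ^ 2 <
      ∑ p : V × V, edgeIndicator H ![x, p.1, p.2])
    {i : ι} (hi : i ∈ typicalColors H d ε μ N c) :
    δ * (∑ j, clusterWeight c (typicalColors H d ε μ N c) j) ^ 2 <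
      ∑ j, ∑ k, if IsClusterEdge H d ε c (typicalColors H d ε μ N c) ![i, j, k]
        then clusterWeight c (typicalColors H d ε μ N c) j *
          clusterWeight c (typicalColors H d ε μ N c) k
        else 0 := by
  obtain ⟨-, x, rfl, hx⟩ := (mem_filter_univ i).1 hi
  refine lt_of_le_of_lt ?_ (sub_lt_iff_lt_add'.2 ((hdeg x).trans_le (sum_edgeIndicator_le hi)))
  have hS : ∑ j, clusterWeight c (typicalColors H d ε μ N c) j ≤ Fintype.card V := by
    rw [sum_clusterWeight]
    exact_mod_cast card_le_univ _
  have hsq : δ * (∑ j, clusterWeight c (typicalColors H d ε μ N c) j) ^ 2 ≤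
      δ * Fintype.card V ^ 2 := by
    gcongr
    exact sum_nonneg fun j _ => by unfold clusterWeight; split_ifs <;> positivity
  nlinarith [(Fintype.card V).cast_nonneg (α := ℝ)]

open Classical in
lemma exists_fractional_clusterTiling [Nonempty V] (hμ : 2 * μ < 1)
    (hG : (#{v | c v ∉ typicalColors H d ε μ N c} : ℝ) ≤ 2 * μ * Fintype.card V)
    (hdeg : ∀ x, (7 / 16 + 5 * μ) * Fintype.card V ^ 2 <
      ∑ p : V × V, edgeIndicator H ![x, p.1, p.2]) :
    ∃ w : {t // IsClusterEdge H d ε c (typicalColors H d ε μ N c) t} → ℝ, (∀ t, 0 ≤ w t) ∧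
      ∀ p, ∑ t, w t * load t.1 p = clusterWeight c (typicalColors H d ε μ N c) p := by
  have hn : (0 : ℝ) < Fintype.card V := Nat.cast_pos.2 Fintype.card_pos
  refine exists_fractional_tiling (fun i => ?_)
    ((mul_pos (by linarith) hn).trans_le (le_sum_clusterWeight hG)) (fun i j k h => h.swap)
    fun i hi => lt_sum_clusterWeight_mul (by norm_num) hG hdeg ?_
  · unfold clusterWeight
    split_ifs <;> positivity
  · by_contra h
    simp [clusterWeight, h] at hi

lemma exists_isMTiling_of_coloring {V : Type} [Fintype V] [DecidableEq V] [Nonempty V]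
    {H : Finset (Finset V)} (hH : ∀ e ∈ H, #e = 3) {c : V → ι} (hd : 0 ≤ d) (hε : 0 ≤ ε)
    (hε₁ : ε ≤ 1) (hμ : 2 * μ < 1)
    (hdeg : ∀ x, (7 / 16 + 5 * μ) * Fintype.card V ^ 2 <
      ∑ p : V × V, edgeIndicator H ![x, p.1, p.2])
    (hG : (#{v | c v ∉ typicalColors H d ε μ N c} : ℝ) ≤ 2 * μ * Fintype.card V)
    (hN : 32 ≤ d ^ 2 * (ε * N)) :
    ∃ (q : ℕ) (gs : Fin q → Fin 8 → V), IsMTiling H gs ∧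
      (1 - ε) * ((1 - 2 * μ) * Fintype.card V) ≤ 8 * (q + Fintype.card ι ^ 3) := by
  classical
  obtain ⟨w, hw, hload⟩ := exists_fractional_clusterTiling hμ hG hdeg
  have hdisj : Pairwise fun i j => Disjoint (colorClass c i) (colorClass c j) := fun i j hij =>
    disjoint_left.2 fun v hi hj => hij (mem_colorClass.1 hi ▸ mem_colorClass.1 hj)
  obtain ⟨q, gs, hgs, hq⟩ := exists_isMTiling_of_fractional hH hd hε₁ hdisj (fun t => t.2.1)
    (fun t k => hN.trans (by gcongr; exact ((mem_filter_univ _).1 (t.2.2 k)).1)) hw fun p => by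
      rw [hload, clusterWeight]
      split_ifs <;> simp
  refine ⟨q, gs, hgs, ?_⟩
  have hsum : 8 * ∑ t, w t = ∑ p, clusterWeight c (typicalColors H d ε μ N c) p := by
    simp only [← hload]
    rw [sum_comm, mul_sum]
    exact sum_congr rfl fun t _ => by rw [← mul_sum, sum_load, mul_comm]
  have hT : (Fintype.card {t // IsClusterEdge H d ε c (typicalColors H d ε μ N c) t} : ℝ) ≤
      Fintype.card ι ^ 3 := by
    exact_mod_cast (Fintype.card_subtype_le _).trans_eq (by simp)
  calc (1 - ε) * ((1 - 2 * μ) * Fintype.card V)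
      ≤ (1 - ε) * (8 * ∑ t, w t) := by
        rw [hsum]
        exact mul_le_mul_of_nonneg_left (le_sum_clusterWeight hG) (sub_nonneg.2 hε₁)
    _ = 8 * ((1 - ε) * ∑ t, w t) := by ring
    _ ≤ 8 * (q + Fintype.card ι ^ 3) := by linarith

end TypicalColors

lemma lt_sum_edgeIndicator_of_degree {V : Type*} [Fintype V] [DecidableEq V]
    {H : Finset (Finset V)} (hH : ∀ e ∈ H, #e = 3) {δ δ' : ℝ}
    (hcard : δ < (δ - δ') * Fintype.card V) {v : V}
    (hdeg : δ * ((Fintype.card V).choose 2 : ℝ) ≤ #{e ∈ H | v ∈ e}) :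
    δ' * Fintype.card V ^ 2 < ∑ p : V × V, edgeIndicator H ![v, p.1, p.2] := by
  have hn : (0 : ℝ) < Fintype.card V := Nat.cast_pos.2 (Fintype.card_pos_iff.2 ⟨v⟩)
  refine lt_of_lt_of_le ?_ (two_mul_degree_le hH v)
  rw [Nat.cast_choose_two] at hdeg
  linarith [mul_lt_mul_of_pos_right hcard hn]

lemma exists_isMTiling_of_lt_sum_edgeIndicator {μ : ℝ} (hμ : 0 < μ) (hμ' : 2 * μ < 1) :
    ∃ n₀ : ℕ, ∀ (V : Type) [Fintype V] [DecidableEq V] (H : Finset (Finset V)),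
      n₀ < Fintype.card V → (∀ e ∈ H, #e = 3) →
      (∀ x, (7 / 16 + 5 * μ) * Fintype.card V ^ 2 <
        ∑ p : V × V, edgeIndicator H ![x, p.1, p.2]) →
      ∃ (q : ℕ) (gs : Fin q → Fin 8 → V), IsMTiling H gs ∧
        (1 - 4 * μ) * Fintype.card V ≤ 8 * q := by
  obtain ⟨L, hL⟩ := exists_regular_coloring (Fin 3) (d := μ ^ 2 / 4) (ε := μ) (η := μ ^ 2 / 2)
    (by positivity) hμ (by positivity)
  obtain ⟨N, hN⟩ := exists_nat_ge (32 / ((μ ^ 2 / 4) ^ 2 * μ))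
  obtain ⟨n₀, hn₀⟩ := exists_nat_ge ((L * N + 8 * L ^ 3) / μ)
  refine ⟨n₀, fun V _ _ H hV hH hdeg => ?_⟩
  have : Nonempty V := Fintype.card_pos_iff.1 (Nat.zero_lt_of_lt hV)
  obtain ⟨ι, _, _, c, hcard, hirr⟩ := hL V (edgeIndicator H) (edgeIndicator_nonneg H)
    (edgeIndicator_le_one H)
  have hcard' : (Fintype.card ι : ℝ) ≤ L := Nat.cast_le.2 hcard
  have hlarge : L * N + 8 * L ^ 3 ≤ μ * (Fintype.card V : ℝ) :=
    (div_le_iff₀' hμ).1 (hn₀.trans (Nat.cast_le.2 hV.le))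
  have hatypical := card_comp_notMem_typicalColors_le (d := μ ^ 2 / 4) (ε := μ) (N := N) hμ
    (hirr.trans_eq (by rw [Fintype.card_fun, Fintype.card_fin]; push_cast; ring))
    ((mul_le_mul_of_nonneg_right hcard' N.cast_nonneg).trans
      ((le_add_of_nonneg_right (by positivity)).trans hlarge))
  obtain ⟨q, gs, hgs, hq⟩ := exists_isMTiling_of_coloring hH (by positivity) hμ.le (by linarith)
    hμ' hdeg hatypical ((div_le_iff₀' (by positivity)).1 hN |>.trans_eq (mul_assoc _ _ _))
  refine ⟨q, gs, hgs, ?_⟩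
  have hcube : (Fintype.card ι : ℝ) ^ 3 ≤ L ^ 3 := by gcongr
  have hLN : (0 : ℝ) ≤ L * N := by positivity
  nlinarith [mul_nonneg (sq_nonneg μ) (Fintype.card V).cast_nonneg (α := ℝ)]

theorem M_tiling_lemma (γ α : ℝ) (hγ : 0 < γ) (hα : 0 < α) :
    ∃ n₀ : ℕ, ∀ (V : Type) [Fintype V] [DecidableEq V], ∀ (H : Finset (Finset V)) (n : ℕ),
      Fintype.card V = n → n₀ < n →
      (∀ e ∈ H, e.card = 3) →
      (∀ v : V, (7 / 16 + γ) * (n.choose 2 : ℝ) ≤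
        ((H.filter (fun e => v ∈ e)).card : ℝ)) →
      ∃ (q : ℕ) (gs : Fin q → Fin 8 → V),
        (∀ i, IsMCopy H (gs i)) ∧
        (∀ i j, i ≠ j → ∀ a b, gs i a ≠ gs j b) ∧
        (((Finset.univ \ Finset.univ.biUnion fun i => Finset.univ.image (gs i)).card : ℝ)
          ≤ α * n) := by
  obtain ⟨μ, hμ, hμ'⟩ : ∃ μ > 0, μ < min (1 / 2) (min (γ / 5) (α / 4)) :=
    exists_between (by positivity)
  simp only [lt_min_iff] at hμ'
  obtain ⟨hμ_half, hμγ, hμα⟩ := hμ'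
  obtain ⟨n₀, htiling⟩ := exists_isMTiling_of_lt_sum_edgeIndicator hμ (by linarith)
  obtain ⟨n₁, hn₁⟩ := exists_nat_gt ((7 / 16 + γ) / (γ - 5 * μ))
  refine ⟨max n₀ n₁, ?_⟩
  rintro V _ _ H _ rfl hV hH hdeg
  obtain ⟨hV₀, hV₁⟩ := max_lt_iff.1 hV
  have hcard : 7 / 16 + γ < (7 / 16 + γ - (7 / 16 + 5 * μ)) * Fintype.card V := by
    rw [add_sub_add_left_eq_sub, ← div_lt_iff₀' (by linarith)]
    exact hn₁.trans (Nat.cast_lt.2 hV₁)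
  obtain ⟨q, gs, hgs, hq⟩ := htiling V H hV₀ hH fun v =>
    lt_sum_edgeIndicator_of_degree hH hcard (hdeg v)
  refine ⟨q, gs, hgs.1, hgs.2, ?_⟩
  change (#(univ \ covered gs) : ℝ) ≤ _
  rw [cast_card_sdiff (subset_univ _), card_univ, hgs.card_covered, Fintype.card_fin]
  push_cast
  nlinarith [(Fintype.card V).cast_nonneg (α := ℝ)]
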